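/- Let q ∈ ℂ with 0 < |q| < 1, and let x, y ∈ ℂ with |x| < 1 and y ≠ q^{-m} for every m ∈ ℕ. Then ∑_{n≥0} x^n / ((q;q)_n (y;q)_n) = [1 / ((x;q)_∞ (y;q)_∞)] · ∑_{n≥0} (x;q)_n (-1)^n q^{n(n-1)/2} y^n / (q;q)_n. -/

import Mathlib

/-- The finite q-shifted factorial `(a;q)_n = ∏_{k=0}^{n-1} (1 - a q^k)`. -/
noncomputable def qPoch (a q : ℂ) (n : ℕ) : ℂ := ∏ k ∈ Finset.range n, (1 - a * q ^ k)

/-- The infinite q-shifted factorial `(a;q)_∞ = ∏_{k=0}^{∞} (1 - a q^k)`. -/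
noncomputable def qPochInf (a q : ℂ) : ℂ := ∏' k : ℕ, (1 - a * q ^ k)

/-!
Let `F(b, c)` be the sum of the terms `∏_{k<n} (b - c q^k) / (q;q)_n`, for `|b| < 1`. Comparing
`F(b, c)` with `F(bq, cq)` term by term gives `(1 - b) F(b, c) = (1 - c) F(bq, cq)`, and iterating
this gives the `q`-binomial theorem `F(b, c) = (c;q)_∞ / (b;q)_∞`. Keeping the pair `(b, c)`
homogeneous makes both of Euler's expansions special cases, at `c = 0` and at `b = 0`.

The double series with terms `u_n(z, w) u_m(b, c) q^{nm}`, where `u_n(b, c)` is the `n`-th term of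
`F(b, c)`, can be summed over either index first. Equating the two results is Heine's transformation
of `₂φ₁`, and `stmt10` is its degenerate case `w = b = 0`.
-/

section

open Filter Topology

theorem summable_norm_of_succ_eq_mul {R : Type*} [SeminormedRing R] {f c : ℕ → R} {l : R}
    (hl : ‖l‖ < 1) (hf : ∀ n, f (n + 1) = f n * c n) (hc : Tendsto c atTop (𝓝 l)) :
    Summable fun n ↦ ‖f n‖ := by
  obtain ⟨r, hlr, hr⟩ := exists_between hl
  refine summable_of_ratio_norm_eventually_le hr ?_
  filter_upwards [hc.norm.eventually_lt_const hlr] with n hn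
  calc ‖‖f (n + 1)‖‖ = ‖f n * c n‖ := by rw [norm_norm, hf]
    _ ≤ ‖f n‖ * ‖c n‖ := norm_mul_le _ _
    _ ≤ r * ‖‖f n‖‖ := by rw [norm_norm, mul_comm]; gcongr

theorem tendsto_tsum_mul_pow_nhds_zero {𝕜 : Type*} [NormedField 𝕜] [CompleteSpace 𝕜] {a : ℕ → 𝕜}
    (ha : Summable fun n ↦ ‖a n‖) :
    Tendsto (fun r : 𝕜 ↦ ∑' n, a n * r ^ n) (𝓝 0) (𝓝 (a 0)) := by
  have hsum : ∑' n, a n * (0 : 𝕜) ^ n = a 0 := by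
    rw [tsum_eq_single 0 fun n hn ↦ by rw [zero_pow hn, mul_zero], pow_zero, mul_one]
  rw [← hsum]
  refine tendsto_tsum_of_dominated_convergence ha (fun n ↦ ?_) ?_
  · exact Continuous.tendsto (by fun_prop) 0
  · filter_upwards [Metric.closedBall_mem_nhds (0 : 𝕜) one_pos] with r hr n
    rw [norm_mul, norm_pow]
    exact mul_le_of_le_one_right (norm_nonneg _)
      (pow_le_one₀ (norm_nonneg _) (mem_closedBall_zero_iff.mp hr))

section NormedField

variable {𝕜 : Type*} [NormedField 𝕜] {a q : 𝕜}

theorem tendsto_const_mul_pow_nhds_zero (a : 𝕜) (hq : ‖q‖ < 1) :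
    Tendsto (fun n : ℕ ↦ a * q ^ n) atTop (𝓝 0) := by
  simpa using (tendsto_pow_atTop_nhds_zero_of_norm_lt_one hq).const_mul a

theorem norm_mul_pow_lt_one (hq : ‖q‖ < 1) (ha : ‖a‖ < 1) (n : ℕ) : ‖a * q ^ n‖ < 1 := by
  rw [norm_mul, norm_pow]
  exact mul_lt_one_of_nonneg_of_lt_one_left (norm_nonneg _) ha
    (pow_le_one₀ (norm_nonneg _) hq.le)

theorem mul_pow_ne_one (hq : ‖q‖ < 1) (ha : ‖a‖ < 1) (n : ℕ) : a * q ^ n ≠ 1 := fun h ↦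
  (norm_mul_pow_lt_one hq ha n).ne (by rw [h, norm_one])

theorem summable_norm_neg_mul_pow (a : 𝕜) (hq : ‖q‖ < 1) :
    Summable fun k : ℕ ↦ ‖-(a * q ^ k)‖ := by
  simpa only [norm_neg, norm_mul, norm_pow] using
    (summable_geometric_of_lt_one (norm_nonneg q) hq).mul_left ‖a‖

theorem summable_mul_mul_pow [CompleteSpace 𝕜] {f g : ℕ → 𝕜}
    (hq : ‖q‖ ≤ 1) (hf : Summable fun n ↦ ‖f n‖) (hg : Summable fun n ↦ ‖g n‖) :
    Summable fun p : ℕ × ℕ ↦ f p.1 * g p.2 * q ^ (p.1 * p.2) := by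
  refine (hf.mul_norm hg).of_norm_bounded fun p ↦ ?_
  rw [norm_mul _ (q ^ _), norm_pow]
  exact mul_le_of_le_one_right (norm_nonneg _) (pow_le_one₀ (norm_nonneg _) hq)

end NormedField

variable {a b c q w z : ℂ}

theorem qPoch_zero (a q : ℂ) : qPoch a q 0 = 1 :=
  Finset.prod_range_zero _

theorem qPoch_succ (a q : ℂ) (n : ℕ) : qPoch a q (n + 1) = qPoch a q n * (1 - a * q ^ n) :=
  Finset.prod_range_succ _ _

theorem qPoch_zero_left (q : ℂ) (n : ℕ) : qPoch 0 q n = 1 := by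
  simp [qPoch]

theorem qPochInf_zero_left (q : ℂ) : qPochInf 0 q = 1 := by
  simp [qPochInf]

theorem qPoch_ne_zero (ha : ∀ k : ℕ, a * q ^ k ≠ 1) (n : ℕ) : qPoch a q n ≠ 0 :=
  Finset.prod_ne_zero_iff.mpr fun k _ ↦ sub_ne_zero.mpr (ha k).symm

theorem multipliable_one_sub_mul_pow (a : ℂ) (hq : ‖q‖ < 1) :
    Multipliable fun k : ℕ ↦ 1 - a * q ^ k := by
  simpa only [sub_eq_add_neg] using
    multipliable_one_add_of_summable (summable_norm_neg_mul_pow a hq)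

theorem tendsto_qPoch_qPochInf (a : ℂ) (hq : ‖q‖ < 1) :
    Tendsto (qPoch a q) atTop (𝓝 (qPochInf a q)) :=
  (multipliable_one_sub_mul_pow a hq).hasProd.tendsto_prod_nat

theorem qPochInf_ne_zero (hq : ‖q‖ < 1) (ha : ∀ k : ℕ, a * q ^ k ≠ 1) : qPochInf a q ≠ 0 := by
  have hfactor (k : ℕ) : 1 + -(a * q ^ k) ≠ 0 := by
    rw [← sub_eq_add_neg]
    exact sub_ne_zero.mpr (ha k).symm
  simpa only [qPochInf, sub_eq_add_neg] using
    tprod_one_add_ne_zero_of_summable hfactor (summable_norm_neg_mul_pow a hq)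

theorem qPoch_mul_qPochInf (a : ℂ) (hq : ‖q‖ < 1) (n : ℕ) :
    qPoch a q n * qPochInf (a * q ^ n) q = qPochInf a q := by
  have hshift (k : ℕ) : 1 - a * q ^ n * q ^ k = 1 - a * q ^ (k + n) := by
    rw [mul_assoc, ← pow_add, add_comm]
  simp only [qPoch, qPochInf, hshift]
  refine Multipliable.prod_mul_tprod_nat_mul' (f := fun k ↦ 1 - a * q ^ k) ?_
  simpa only [hshift] using multipliable_one_sub_mul_pow (a * q ^ n) hq

/-- The `n`-th term of the `q`-binomial series, in the homogeneous form
`∏_{k<n} (b - c q^k) / (q;q)_n`. For `b ≠ 0` it is the usual `(c/b;q)_n b^n / (q;q)_n`, but `b = 0`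
is allowed too. -/
noncomputable def qBinomTerm (b c q : ℂ) (n : ℕ) : ℂ :=
  (∏ k ∈ Finset.range n, (b - c * q ^ k)) / qPoch q q n

theorem qBinomTerm_zero (b c q : ℂ) : qBinomTerm b c q 0 = 1 := by
  simp [qBinomTerm, qPoch_zero]

theorem qBinomTerm_succ (b c q : ℂ) (n : ℕ) :
    qBinomTerm b c q (n + 1) = qBinomTerm b c q n * ((b - c * q ^ n) / (1 - q * q ^ n)) := by
  rw [qBinomTerm, qBinomTerm, Finset.prod_range_succ, qPoch_succ, mul_div_mul_comm]

theorem qBinomTerm_mul_mul (b c q r : ℂ) (n : ℕ) :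
    qBinomTerm (b * r) (c * r) q n = qBinomTerm b c q n * r ^ n := by
  have hfactor (k : ℕ) : b * r - c * r * q ^ k = (b - c * q ^ k) * r := by ring
  simp only [qBinomTerm, hfactor, Finset.prod_mul_distrib, Finset.prod_const, Finset.card_range]
  ring

theorem qBinomTerm_zero_middle (b q : ℂ) (n : ℕ) : qBinomTerm b 0 q n = b ^ n / qPoch q q n := by
  simp [qBinomTerm]

theorem qBinomTerm_zero_left (c q : ℂ) (n : ℕ) :
    qBinomTerm 0 c q n = (-1) ^ n * q ^ (n * (n - 1) / 2) * c ^ n / qPoch q q n := by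
  have hprod : ∏ k ∈ Finset.range n, (0 - c * q ^ k) = (-c) ^ n * q ^ (n * (n - 1) / 2) := by
    simp only [zero_sub, ← neg_mul, Finset.prod_mul_distrib, Finset.prod_const, Finset.card_range]
    rw [Finset.prod_pow_eq_pow_sum (Finset.range n) (fun k ↦ k) q, Finset.sum_range_id]
  rw [qBinomTerm, hprod, neg_pow]
  ring

theorem summable_norm_qBinomTerm (c : ℂ) (hq : ‖q‖ < 1) (hb : ‖b‖ < 1) :
    Summable fun n ↦ ‖qBinomTerm b c q n‖ := by
  refine summable_norm_of_succ_eq_mul hb (qBinomTerm_succ b c q) ?_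
  simpa [Pi.div_def] using ((tendsto_const_mul_pow_nhds_zero c hq).const_sub b).div
    ((tendsto_const_mul_pow_nhds_zero q hq).const_sub 1) (by simp)

theorem one_sub_mul_tsum_qBinomTerm (c : ℂ) (hq : ‖q‖ < 1) (hb : ‖b‖ < 1) :
    (1 - b) * ∑' n, qBinomTerm b c q n = (1 - c) * ∑' n, qBinomTerm (b * q) (c * q) q n := by
  have hbq : ‖b * q‖ < 1 := by simpa using norm_mul_pow_lt_one hq hb 1
  have hsum := (summable_norm_qBinomTerm c hq hb).of_norm
  have hsumq := (summable_norm_qBinomTerm (c * q) hq hbq).of_norm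
  have hterm (n : ℕ) : qBinomTerm b c q (n + 1) - qBinomTerm (b * q) (c * q) q (n + 1)
      = b * qBinomTerm b c q n - c * qBinomTerm (b * q) (c * q) q n := by
    have hne : 1 - q * q ^ n ≠ 0 := sub_ne_zero.mpr (mul_pow_ne_one hq hq n).symm
    have hsucc : qBinomTerm b c q (n + 1) * (1 - q * q ^ n)
        = qBinomTerm b c q n * (b - c * q ^ n) := by
      rw [qBinomTerm_succ, mul_assoc, div_mul_cancel₀ _ hne]
    rw [qBinomTerm_mul_mul, qBinomTerm_mul_mul, pow_succ']
    linear_combination hsucc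
  have hdiff : ∑' n, qBinomTerm b c q n - ∑' n, qBinomTerm (b * q) (c * q) q n
      = b * ∑' n, qBinomTerm b c q n - c * ∑' n, qBinomTerm (b * q) (c * q) q n := by
    rw [← hsum.tsum_sub hsumq, (hsum.sub hsumq).tsum_eq_zero_add, ← tsum_mul_left,
      ← tsum_mul_left, ← (hsum.mul_left b).tsum_sub (hsumq.mul_left c)]
    simp only [hterm, qBinomTerm_zero, sub_self, zero_add]
  linear_combination hdiff

theorem qPoch_mul_tsum_qBinomTerm (c : ℂ) (hq : ‖q‖ < 1) (hb : ‖b‖ < 1) (N : ℕ) :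
    qPoch b q N * ∑' n, qBinomTerm b c q n
      = qPoch c q N * ∑' n, qBinomTerm (b * q ^ N) (c * q ^ N) q n := by
  induction N with
  | zero => simp [qPoch_zero]
  | succ N ih =>
    have hstep := one_sub_mul_tsum_qBinomTerm (c * q ^ N) hq (norm_mul_pow_lt_one hq hb N)
    rw [qPoch_succ, qPoch_succ, pow_succ, ← mul_assoc b, ← mul_assoc c]
    linear_combination (1 - b * q ^ N) * ih + qPoch c q N * hstep

theorem qPochInf_mul_tsum_qBinomTerm (c : ℂ) (hq : ‖q‖ < 1) (hb : ‖b‖ < 1) :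
    qPochInf b q * ∑' n, qBinomTerm b c q n = qPochInf c q := by
  have hlim : Tendsto (fun N : ℕ ↦ ∑' n, qBinomTerm (b * q ^ N) (c * q ^ N) q n) atTop (𝓝 1) := by
    simpa only [qBinomTerm_mul_mul, qBinomTerm_zero, Function.comp_def] using
      (tendsto_tsum_mul_pow_nhds_zero (summable_norm_qBinomTerm c hq hb)).comp
        (tendsto_pow_atTop_nhds_zero_of_norm_lt_one hq)
  have hleft := (tendsto_qPoch_qPochInf b hq).mul_const (∑' n, qBinomTerm b c q n)
  have hright := (tendsto_qPoch_qPochInf c hq).mul hlim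
  rw [mul_one] at hright
  exact tendsto_nhds_unique (hleft.congr (qPoch_mul_tsum_qBinomTerm c hq hb)) hright

theorem tsum_qBinomTerm_mul_pow (hq : ‖q‖ < 1) (hb : ‖b‖ < 1) (hc : ∀ k : ℕ, c * q ^ k ≠ 1)
    (n : ℕ) :
    ∑' m, qBinomTerm b c q m * (q ^ n) ^ m
      = qPochInf c q / qPochInf b q * (qPoch b q n / qPoch c q n) := by
  have hbn := norm_mul_pow_lt_one hq hb n
  have hbinom := qPochInf_mul_tsum_qBinomTerm (c * q ^ n) hq hbn
  have hInf : qPochInf (b * q ^ n) q ≠ 0 := qPochInf_ne_zero hq (mul_pow_ne_one hq hbn)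
  simp only [qBinomTerm_mul_mul] at hbinom
  calc ∑' m, qBinomTerm b c q m * (q ^ n) ^ m
      = qPochInf (c * q ^ n) q / qPochInf (b * q ^ n) q :=
        eq_div_of_mul_eq hInf (by rw [mul_comm, hbinom])
    _ = (qPochInf c q / qPoch c q n) / (qPochInf b q / qPoch b q n) := by
        rw [← qPoch_mul_qPochInf b hq n, ← qPoch_mul_qPochInf c hq n,
          mul_div_cancel_left₀ _ (qPoch_ne_zero hc n),
          mul_div_cancel_left₀ _ (qPoch_ne_zero (mul_pow_ne_one hq hb) n)]
    _ = qPochInf c q / qPochInf b q * (qPoch b q n / qPoch c q n) := by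
        rw [div_div_div_comm, div_eq_mul_inv, inv_div]

theorem heine_transformation (hq : ‖q‖ < 1) (hz : ‖z‖ < 1) (hb : ‖b‖ < 1)
    (hw : ∀ k : ℕ, w * q ^ k ≠ 1) (hc : ∀ k : ℕ, c * q ^ k ≠ 1) :
    qPochInf c q / qPochInf b q * ∑' n, qBinomTerm z w q n * (qPoch b q n / qPoch c q n)
      = qPochInf w q / qPochInf z q *
        ∑' n, qBinomTerm b c q n * (qPoch z q n / qPoch w q n) := by
  have hswap := (summable_mul_mul_pow hq.le (summable_norm_qBinomTerm w hq hz)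
    (summable_norm_qBinomTerm c hq hb)).tsum_comm (f := fun n m ↦
      qBinomTerm z w q n * qBinomTerm b c q m * q ^ (n * m))
  have hrow (n : ℕ) : ∑' m, qBinomTerm z w q n * qBinomTerm b c q m * q ^ (n * m)
      = qPochInf c q / qPochInf b q * (qBinomTerm z w q n * (qPoch b q n / qPoch c q n)) := by
    simp only [mul_assoc, pow_mul, tsum_mul_left, tsum_qBinomTerm_mul_pow hq hb hc]
    ring
  have hcol (m : ℕ) : ∑' n, qBinomTerm z w q n * qBinomTerm b c q m * q ^ (n * m)
      = qPochInf w q / qPochInf z q * (qBinomTerm b c q m * (qPoch z q m / qPoch w q m)) := by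
    simp only [mul_right_comm _ (qBinomTerm b c q m), mul_comm _ m, pow_mul, tsum_mul_right,
      tsum_qBinomTerm_mul_pow hq hz hw]
    ring
  simpa only [hrow, hcol, tsum_mul_left] using hswap.symm

end

theorem stmt10 (q : ℂ) (hq0 : 0 < ‖q‖) (hq1 : ‖q‖ < 1)
    (x y : ℂ) (hx : ‖x‖ < 1) (hy : ∀ m : ℕ, y ≠ q ^ (-(m : ℤ))) :
    ∑' n : ℕ, x ^ n / (qPoch q q n * qPoch y q n)
    = (1 / (qPochInf x q * qPochInf y q)) *
      ∑' n : ℕ, qPoch x q n * (-1 : ℂ) ^ n * q ^ (n * (n - 1) / 2) * y ^ n / qPoch q q n := by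
  have hyq (k : ℕ) : y * q ^ k ≠ 1 := fun h ↦
    hy k (by rw [zpow_neg, zpow_natCast]; exact eq_inv_of_mul_eq_one_left h)
  have hyInf : qPochInf y q ≠ 0 := qPochInf_ne_zero hq1 hyq
  have heine := heine_transformation (b := 0) (w := 0) hq1 hx (by simp) (by simp) hyq
  simp only [qPochInf_zero_left, qPoch_zero_left, qBinomTerm_zero_middle, qBinomTerm_zero_left,
    div_one, div_mul_div_comm, mul_one] at heine
  calc ∑' n : ℕ, x ^ n / (qPoch q q n * qPoch y q n)
      = 1 / qPochInf y q * (qPochInf y q * ∑' n : ℕ, x ^ n / (qPoch q q n * qPoch y q n)) := by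
        field_simp
    _ = 1 / (qPochInf x q * qPochInf y q) * ∑' n : ℕ,
          (-1) ^ n * q ^ (n * (n - 1) / 2) * y ^ n / qPoch q q n * qPoch x q n := by
        rw [heine]
        ring
    _ = _ := by
        congr! 3
        ring
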